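/- The function f satisfies the non-AR superlinearity condition with exponent μ = p_+ and constant 1/p_+: for every ε > 0 there exists M ≥ 1 such that (f(z,x)x − p_+ F(z,x)) / |x|^{p_+} ≥ 1/p_+ − ε for all z ∈ closure(Ω) and all |x| ≥ M; that is, liminf_{x→±∞} (f(z,x)x − p_+F(z,x))/|x|^{p_+} ≥ 1/p_+ > 0 uniformly for z ∈ closure(Ω). -/

import Mathlib

open MeasureTheory Filter intervalIntegral

/-!
For `x > 1` the superlinear terms of `f x * x - P * F x` combine to
`x ^ P / P + (x ^ q - P * ∫₁ˣ s ^ (q - 1)) + (P / 2 - 1) * x ^ 2`, up to a constant: the two terms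
`x ^ P * log x` cancel, and the primitive of `s ^ (P - 1) * log s` leaves `x ^ P / P` behind.
The bracket is the only term that can be negative and grow. It is at least
`-(4 / P) * x ^ P / log x` for every `q ≤ P`, because `(P - q) * log x ≤ x ^ (P - q)`; when `q` is
close to `P`, the factor `P - q` makes up for the missing gap between the two powers.
-/

/-- The quantity `g(x) x - μ G(x)`, with `G` the primitive of `g` vanishing at `0`, on which
conditions of Ambrosetti–Rabinowitz type with exponent `μ` are imposed. -/
noncomputable def arDefect (g : ℝ → ℝ) (μ x : ℝ) : ℝ :=
  g x * x - μ * ∫ s in (0 : ℝ)..x, g s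

lemma arDefect_even {g : ℝ → ℝ} (hg : g.Odd) (μ : ℝ) : (arDefect g μ).Even := by
  intro x
  have h : ∫ s in (0 : ℝ)..-x, g s = ∫ s in (0 : ℝ)..x, g s := by
    have hneg := integral_comp_neg (a := -x) (b := 0) g
    rw [neg_zero, neg_neg] at hneg
    rw [← hneg, integral_symm, ← intervalIntegral.integral_neg]
    simp only [hg.eq]
  rw [arDefect, arDefect, h, hg.eq, neg_mul_neg]

section PowerEstimates

variable {P q x : ℝ}

lemma mul_log_le_rpow (hx : 0 < x) (a : ℝ) : a * Real.log x ≤ x ^ a := by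
  rw [Real.rpow_def_of_pos hx]
  linarith [Real.add_one_le_exp (Real.log x * a)]

lemma sub_mul_rpow_le_rpow_div_log (hx : 1 < x) (P q : ℝ) :
    (P - q) * x ^ q ≤ x ^ P / Real.log x := by
  have hx0 : 0 < x := zero_lt_one.trans hx
  rw [le_div_iff₀ (Real.log_pos hx)]
  calc (P - q) * x ^ q * Real.log x = (P - q) * Real.log x * x ^ q := by ring
    _ ≤ x ^ (P - q) * x ^ q := by gcongr; exact mul_log_le_rpow hx0 _
    _ = x ^ P := by rw [← Real.rpow_add hx0, sub_add_cancel]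

lemma intervalIntegrable_rpow_one (hx : 0 < x) (r : ℝ) :
    IntervalIntegrable (fun s : ℝ => s ^ r) volume 1 x :=
  intervalIntegrable_rpow (Or.inr (Set.notMem_uIcc_of_lt zero_lt_one hx))

lemma integral_rpow_sub_one_mono (hx : 1 ≤ x) :
    Monotone fun q : ℝ => ∫ s in (1 : ℝ)..x, s ^ (q - 1) := by
  intro q r hqr
  have hx0 : 0 < x := zero_lt_one.trans_le hx
  refine integral_mono_on hx (intervalIntegrable_rpow_one hx0 _)
    (intervalIntegrable_rpow_one hx0 _) fun s hs => ?_
  exact Real.rpow_le_rpow_of_exponent_le hs.1 (by linarith)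

lemma integral_rpow_sub_one (hq : 0 < q) : ∫ s in (1 : ℝ)..x, s ^ (q - 1) = (x ^ q - 1) / q := by
  rw [integral_rpow (Or.inl (by linarith)), sub_add_cancel, Real.one_rpow]

-- Away from `q = P` the integral itself has order at most `x ^ (P / 2)`; near `q = P` the
-- difference is at most `(P - q) / q * x ^ q`.
lemma mul_integral_rpow_sub_rpow_le (hP : 0 < P) (hq : q ≤ P) (hx : 1 < x) :
    P * (∫ s in (1 : ℝ)..x, s ^ (q - 1)) - x ^ q ≤ 4 / P * (x ^ P / Real.log x) := by
  have hx0 : 0 < x := zero_lt_one.trans hx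
  rcases le_total q (P / 2) with hqP | hPq
  · have hhalf := sub_mul_rpow_le_rpow_div_log hx P (P / 2)
    calc P * (∫ s in (1 : ℝ)..x, s ^ (q - 1)) - x ^ q
        ≤ P * ∫ s in (1 : ℝ)..x, s ^ (q - 1) := sub_le_self _ (Real.rpow_nonneg hx0.le q)
      _ ≤ P * ∫ s in (1 : ℝ)..x, s ^ (P / 2 - 1) := by
          gcongr
          exact integral_rpow_sub_one_mono hx.le hqP
      _ = 2 * x ^ (P / 2) - 2 := by
          rw [integral_rpow_sub_one (half_pos hP)]
          field_simp
      _ ≤ 4 / P * ((P - P / 2) * x ^ (P / 2)) := by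
          rw [show 4 / P * ((P - P / 2) * x ^ (P / 2)) = 2 * x ^ (P / 2) by field_simp; ring]
          linarith
      _ ≤ 4 / P * (x ^ P / Real.log x) := by gcongr
  · have hq0 : 0 < q := (half_pos hP).trans_le hPq
    have hgap : 0 ≤ (P - q) * x ^ q := mul_nonneg (sub_nonneg.2 hq) (Real.rpow_nonneg hx0.le q)
    have hinv : 1 / q ≤ 4 / P := by
      rw [div_le_div_iff₀ hq0 hP]
      linarith
    calc P * (∫ s in (1 : ℝ)..x, s ^ (q - 1)) - x ^ q
        = 1 / q * ((P - q) * x ^ q) - P / q := by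
          rw [integral_rpow_sub_one hq0]
          field_simp
          ring
      _ ≤ 1 / q * ((P - q) * x ^ q) := sub_le_self _ (by positivity)
      _ ≤ 4 / P * ((P - q) * x ^ q) := mul_le_mul_of_nonneg_right hinv hgap
      _ ≤ 4 / P * (x ^ P / Real.log x) := by
          gcongr
          exact sub_mul_rpow_le_rpow_div_log hx P q

lemma hasDerivAt_rpow_mul_log_div_sub (hP : P ≠ 0) (hx : x ≠ 0) :
    HasDerivAt (fun s : ℝ => s ^ P * Real.log s / P - s ^ P / P ^ 2)
      (x ^ (P - 1) * Real.log x) x := by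
  have hpow := Real.hasDerivAt_rpow_const (p := P) (Or.inl hx)
  have hlog := Real.hasDerivAt_log hx
  refine (((hpow.mul hlog).div_const P).sub (hpow.div_const (P ^ 2))).congr_deriv ?_
  rw [Real.rpow_sub_one hx]
  field_simp
  ring

lemma ne_zero_of_mem_uIcc_one {s : ℝ} (hx : 0 < x) (hs : s ∈ Set.uIcc 1 x) : s ≠ 0 :=
  ne_of_mem_of_not_mem hs (Set.notMem_uIcc_of_lt zero_lt_one hx)

lemma intervalIntegrable_rpow_mul_log (hx : 0 < x) (r : ℝ) :
    IntervalIntegrable (fun s : ℝ => s ^ r * Real.log s) volume 1 x :=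
  (intervalIntegrable_rpow_one hx r).mul_continuousOn
    (Real.continuousOn_log.mono fun _ hs => ne_zero_of_mem_uIcc_one hx hs)

lemma integral_rpow_sub_one_mul_log (hP : P ≠ 0) (hx : 0 < x) :
    ∫ s in (1 : ℝ)..x, s ^ (P - 1) * Real.log s =
      x ^ P * Real.log x / P - (x ^ P - 1) / P ^ 2 := by
  rw [integral_eq_sub_of_hasDerivAt
    (fun s hs => hasDerivAt_rpow_mul_log_div_sub hP (ne_zero_of_mem_uIcc_one hx hs))
    (intervalIntegrable_rpow_mul_log hx _)]
  simp only [Real.one_rpow, Real.log_one]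
  ring

end PowerEstimates

section Reaction

variable {θ P q x : ℝ}

/-- The reaction term `f(z, ·)` at a point `z` where the variable exponent is `q = p(z)`; `P` stands
for `p_+`. The first branch gives `0` at `x = 0`, whatever the value of `0 ^ (θ - 2)`. -/
noncomputable def reaction (θ P q x : ℝ) : ℝ :=
  if |x| ≤ 1 then (|x| ^ (θ - 2) - 1) * x
  else |x| ^ (P - 2) * x * Real.log |x| + (|x| ^ (q - 2) - 1) * x

lemma eq_reaction {g : ℝ → ℝ} (h0 : g 0 = 0)
    (hsmall : ∀ x : ℝ, x ≠ 0 → |x| ≤ 1 → g x = (|x| ^ (θ - 2) - 1) * x)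
    (hbig : ∀ x : ℝ, 1 < |x| →
      g x = |x| ^ (P - 2) * x * Real.log |x| + (|x| ^ (q - 2) - 1) * x) :
    g = reaction θ P q := by
  funext x
  rcases eq_or_ne x 0 with rfl | hx0
  · simp [reaction, h0]
  rcases le_or_gt |x| 1 with hx | hx
  · rw [reaction, if_pos hx, hsmall x hx0 hx]
  · rw [reaction, if_neg hx.not_ge, hbig x hx]

lemma reaction_odd (θ P q : ℝ) : (reaction θ P q).Odd := by
  intro x
  simp only [reaction, abs_neg]
  split_ifs <;> ring

lemma rpow_sub_two_mul_self (hx : 0 < x) (r : ℝ) : x ^ (r - 2) * x = x ^ (r - 1) := by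
  rw [← Real.rpow_add_one hx.ne']
  congr 1
  ring

lemma reaction_of_le_one (hx0 : 0 < x) (hx : x ≤ 1) : reaction θ P q x = x ^ (θ - 1) - x := by
  rw [reaction, abs_of_pos hx0, if_pos hx, sub_mul, one_mul, rpow_sub_two_mul_self hx0]

lemma reaction_of_one_lt (hx : 1 < x) :
    reaction θ P q x = x ^ (P - 1) * Real.log x + x ^ (q - 1) - x := by
  have hx0 : 0 < x := zero_lt_one.trans hx
  rw [reaction, abs_of_pos hx0, if_neg hx.not_ge, sub_mul, one_mul, rpow_sub_two_mul_self hx0,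
    rpow_sub_two_mul_self hx0, add_sub_assoc]

lemma eqOn_reaction_uIoc_zero_one :
    Set.EqOn (fun s => s ^ (θ - 1) - s) (reaction θ P q) (Set.uIoc 0 1) := by
  intro s hs
  rw [Set.uIoc_of_le zero_le_one] at hs
  exact (reaction_of_le_one hs.1 hs.2).symm

lemma eqOn_reaction_uIoc_one (hx : 1 ≤ x) :
    Set.EqOn (fun s => s ^ (P - 1) * Real.log s + s ^ (q - 1) - s) (reaction θ P q)
      (Set.uIoc 1 x) := by
  intro s hs
  rw [Set.uIoc_of_le hx] at hs
  exact (reaction_of_one_lt hs.1).symm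

lemma intervalIntegrable_reaction_zero_one (hθ : 0 < θ) :
    IntervalIntegrable (reaction θ P q) volume 0 1 :=
  ((intervalIntegrable_rpow' (by linarith)).sub intervalIntegrable_id).congr
    eqOn_reaction_uIoc_zero_one

lemma intervalIntegrable_reaction_one (hx : 1 ≤ x) :
    IntervalIntegrable (reaction θ P q) volume 1 x :=
  have hx0 : 0 < x := zero_lt_one.trans_le hx
  (((intervalIntegrable_rpow_mul_log hx0 _).add (intervalIntegrable_rpow_one hx0 _)).sub
    intervalIntegrable_id).congr (eqOn_reaction_uIoc_one hx)

lemma integral_reaction_zero_one (hθ : 0 < θ) :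
    ∫ s in (0 : ℝ)..1, reaction θ P q s = 1 / θ - 1 / 2 := by
  rw [← integral_congr_ae (Eventually.of_forall eqOn_reaction_uIoc_zero_one),
    integral_sub (intervalIntegrable_rpow' (by linarith)) intervalIntegrable_id,
    integral_rpow (Or.inl (by linarith)), integral_id, sub_add_cancel, Real.zero_rpow hθ.ne',
    Real.one_rpow]
  norm_num

lemma integral_reaction_one (hP : P ≠ 0) (hx : 1 ≤ x) :
    ∫ s in (1 : ℝ)..x, reaction θ P q s =
      x ^ P * Real.log x / P - (x ^ P - 1) / P ^ 2 + (∫ s in (1 : ℝ)..x, s ^ (q - 1))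
        - (x ^ 2 - 1) / 2 := by
  have hx0 : 0 < x := zero_lt_one.trans_le hx
  have hlog := intervalIntegrable_rpow_mul_log hx0 (P - 1)
  have hpow := intervalIntegrable_rpow_one hx0 (q - 1)
  rw [← integral_congr_ae (Eventually.of_forall (eqOn_reaction_uIoc_one hx)),
    integral_sub (hlog.add hpow) intervalIntegrable_id, integral_add hlog hpow,
    integral_rpow_sub_one_mul_log hP hx0, integral_id, one_pow]

lemma arDefect_reaction (hθ : 0 < θ) (hP : P ≠ 0) (hx : 1 < x) :
    arDefect (reaction θ P q) P x =
      x ^ P / P + (P / 2 - 1) * x ^ 2 - (P * (∫ s in (1 : ℝ)..x, s ^ (q - 1)) - x ^ q)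
        - (1 / P + P / θ) := by
  have hx0 : x ≠ 0 := (zero_lt_one.trans hx).ne'
  rw [arDefect, ← integral_add_adjacent_intervals (intervalIntegrable_reaction_zero_one hθ)
    (intervalIntegrable_reaction_one hx.le), integral_reaction_zero_one hθ,
    integral_reaction_one hP hx.le, reaction_of_one_lt hx, Real.rpow_sub_one hx0,
    Real.rpow_sub_one hx0]
  field_simp
  ring

lemma le_arDefect_reaction_div_rpow (hθ : 0 < θ) (hP : 2 ≤ P) (hq : q ≤ P) (hx : 1 < x) :
    1 / P - (4 / P + 1 / P ^ 2 + 1 / θ) / Real.log x ≤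
      arDefect (reaction θ P q) P x / x ^ P := by
  have hP0 : 0 < P := two_pos.trans_le hP
  have hlog : 0 < Real.log x := Real.log_pos hx
  have hxP : 0 < x ^ P := Real.rpow_pos_of_pos (zero_lt_one.trans hx) P
  have hquadratic : 0 ≤ (P / 2 - 1) * x ^ 2 := mul_nonneg (by linarith) (sq_nonneg x)
  have hpower := mul_integral_rpow_sub_rpow_le hP0 hq hx
  have hconst : 1 / P + P / θ ≤ (1 / P ^ 2 + 1 / θ) * (x ^ P / Real.log x) := by
    calc 1 / P + P / θ = (1 / P ^ 2 + 1 / θ) * P := by field_simp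
      _ ≤ (1 / P ^ 2 + 1 / θ) * (x ^ P / Real.log x) := by
          gcongr
          rw [le_div_iff₀ hlog]
          exact mul_log_le_rpow (zero_lt_one.trans hx) P
  rw [le_div_iff₀ hxP, arDefect_reaction hθ hP0.ne' hx]
  linear_combination hquadratic + hpower + hconst

lemma exists_forall_le_arDefect_reaction_div_rpow (hθ : 0 < θ) (hP : 2 ≤ P) {ε : ℝ}
    (hε : 0 < ε) :
    ∃ M : ℝ, 1 ≤ M ∧ ∀ q ≤ P, ∀ x : ℝ, M ≤ |x| →
      1 / P - ε ≤ arDefect (reaction θ P q) P x / |x| ^ P := by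
  have : 0 < P := two_pos.trans_le hP
  set C := 4 / P + 1 / P ^ 2 + 1 / θ
  have : 0 < C := by positivity
  refine ⟨Real.exp (C / ε), Real.one_le_exp (by positivity), fun q hq x hx => ?_⟩
  have hx1 : 1 < |x| := (Real.one_lt_exp_iff.2 (by positivity)).trans_le hx
  have hrate : C / Real.log |x| ≤ ε := by
    rw [div_le_comm₀ (Real.log_pos hx1) hε]
    exact (Real.le_log_iff_exp_le (zero_lt_one.trans hx1)).2 hx
  have heven : arDefect (reaction θ P q) P |x| = arDefect (reaction θ P q) P x := by
    rcases abs_choice x with h | h <;> rw [h]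
    exact arDefect_even (reaction_odd θ P q) P x
  rw [← heven]
  exact (sub_le_sub_left hrate _).trans (le_arDefect_reaction_div_rpow hθ hP hq hx1)

end Reaction

theorem satisfies_non_AR_superlinearity_general
    {Z : Type*} (S : Set Z) {θ : ℝ} (hθ : 0 < θ) (p : Z → ℝ) {P : ℝ} (hP : 2 ≤ P)
    (hp : ∀ z ∈ S, p z ≤ P) (f : Z → ℝ → ℝ)
    (hf0 : ∀ z, f z 0 = 0)
    (hfsmall : ∀ z, ∀ x : ℝ, x ≠ 0 → |x| ≤ 1 → f z x = (|x| ^ (θ - 2) - 1) * x)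
    (hfbig : ∀ z, ∀ x : ℝ, 1 < |x| →
      f z x = |x| ^ (P - 2) * x * Real.log |x| + (|x| ^ (p z - 2) - 1) * x) :
    ∀ ε > (0 : ℝ), ∃ M : ℝ, 1 ≤ M ∧ ∀ z ∈ S, ∀ x : ℝ, M ≤ |x| →
      1 / P - ε ≤ (f z x * x - P * ∫ s in (0 : ℝ)..x, f z s) / |x| ^ P := by
  intro ε hε
  obtain ⟨M, hM, hle⟩ := exists_forall_le_arDefect_reaction_div_rpow hθ hP hε
  refine ⟨M, hM, fun z hz x hx => ?_⟩
  rw [eq_reaction (hf0 z) (hfsmall z) (hfbig z)]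
  exact hle (p z) (hp z hz) x hx

theorem satisfies_non_AR_superlinearity
    {N : ℕ} (hN : 1 ≤ N) (Ω : Set (Fin N → ℝ)) (hΩne : Ω.Nonempty) (hΩop : IsOpen Ω)
    (hΩbd : Bornology.IsBounded Ω)
    (θ : ℝ) (hθ1 : 1 < θ) (hθ2 : θ < 2)
    (p : (Fin N → ℝ) → ℝ) (hpc : ContinuousOn p (closure Ω))
    (pm pp : ℝ) (hpm : IsLeast (p '' closure Ω) pm) (hpp : IsGreatest (p '' closure Ω) pp)
    (hpm2 : 2 < pm)
    (f : (Fin N → ℝ) → ℝ → ℝ)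
    (hf0 : ∀ z, f z 0 = 0)
    (hfsmall : ∀ z, ∀ x : ℝ, x ≠ 0 → |x| ≤ 1 → f z x = (|x| ^ (θ - 2) - 1) * x)
    (hfbig : ∀ z, ∀ x : ℝ, 1 < |x| →
      f z x = |x| ^ (pp - 2) * x * Real.log |x| + (|x| ^ (p z - 2) - 1) * x) :
    ∀ ε > (0:ℝ), ∃ M : ℝ, 1 ≤ M ∧ ∀ z ∈ closure Ω, ∀ x : ℝ, M ≤ |x| →
      1 / pp - ε ≤ (f z x * x - pp * ∫ s in (0:ℝ)..x, f z s) / |x| ^ pp :=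
  satisfies_non_AR_superlinearity_general (closure Ω) (zero_lt_one.trans hθ1) p
    (hpm2.le.trans (hpp.2 hpm.1)) (fun _ hz => hpp.2 (Set.mem_image_of_mem p hz))
    f hf0 hfsmall hfbig
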